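/- Let (∇_i)_{i∈I} be a finite family of lattice polyhedra in ℝʳ, all with the same tail cone C₀, such that ∇ := ⋃_{i∈I} ∇_i is again a lattice polyhedron with tail cone C₀ and, for every nonempty I' ⊆ I, the intersection ∇_{I'} := ⋂_{i∈I'} ∇_i is either empty or a lattice polyhedron with tail cone C₀. Define F(∅) := ∇ and F(I') := ∇_{I'} for nonempty I'. Then the subcomplex C^F_• of the Koszul complex defined by C^F_p := span_ℂ{e_{I'} : #I' = p and F(I') ≠ ∅} ⊆ ⋀^p ℂ^I is exact (its homology vanishes in every degree), and moreover C^F_• = Σ_{m ∈ ℤʳ} C^F_•(m). -/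

import Mathlib

open Pointwise

noncomputable section

variable {I : Type*} [Fintype I] [LinearOrder I]

/-- The basis vector `e_J` of the Koszul complex `⋀^• ℂ^I`, indexed by the subset
`J = {i_0 < ⋯ < i_{p-1}} ⊆ I`.  The total space of the Koszul complex is modelled as
`Finset I → ℂ`, with `⋀^p ℂ^I` the span of the `e_J` with `J.card = p`. -/
def eVec (J : Finset I) : Finset I → ℂ := fun K => if K = J then 1 else 0

/-- The Koszul differential: `d (e_{I'}) = ∑_j (-1)^j e_{I' \ {i_j}}` for
`I' = {i_0 < ⋯ < i_p}`. -/
def koszulD : (Finset I → ℂ) →ₗ[ℂ] (Finset I → ℂ) where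
  toFun f := fun J => ∑ i ∈ Jᶜ, (-1 : ℂ) ^ (J.filter (· < i)).card * f (insert i J)
  map_add' f g := by
    funext J
    simp [mul_add, Finset.sum_add_distrib]
  map_smul' c f := by
    funext J
    simp only [Pi.smul_apply, smul_eq_mul, RingHom.id_apply, Finset.mul_sum]
    exact Finset.sum_congr rfl fun i _ => by ring

/-- The degree-`p` part of the evaluation subcomplex `C^F_•(m)`:
the span of the `e_{I'}` with `#I' = p` and `m ∈ F(I')`. -/
def evalC {α : Type*} (F : Finset I → Set α) (m : α) (p : ℕ) :
    Submodule ℂ (Finset I → ℂ) :=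
  Submodule.span ℂ {v | ∃ J : Finset I, J.card = p ∧ m ∈ F J ∧ v = eVec J}

/-- The degree-`p` part of the subcomplex `C^F_•` of the Koszul complex:
the span of the `e_{I'}` with `#I' = p` and `F(I') ≠ ∅`. -/
def fullC {α : Type*} (F : Finset I → Set α) (p : ℕ) :
    Submodule ℂ (Finset I → ℂ) :=
  Submodule.span ℂ {v | ∃ J : Finset I, J.card = p ∧ (F J).Nonempty ∧ v = eVec J}

/-- Exactness of the subcomplex `C^F_•`: its homology vanishes in every degree `p ≥ 0`
(in degree `0` this means `C^F_0 = d (C^F_1)`, since the differential vanishes on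
degree `0`). -/
def fullExact {α : Type*} (F : Finset I → Set α) : Prop :=
  ∀ p : ℕ, ∀ x ∈ fullC F p, koszulD x = 0 →
    ∃ y ∈ fullC F (p + 1), koszulD y = x

/-- The contravariant functor associated to a family `(∇_i)_{i ∈ I}` of subsets:
`F(∅) = ⋃_i ∇_i` and `F(I') = ⋂_{i ∈ I'} ∇_i` for nonempty `I' ⊆ I`. -/
def familyFunctor {α : Type*} (nab : I → Set α) (J : Finset I) : Set α :=
  if J = ∅ then ⋃ i, nab i else ⋂ i ∈ J, nab i

/-- The canonical inclusion of the standard lattice `ℤʳ` into `ℝʳ`. -/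
def intVec {r : ℕ} (v : Fin r → ℤ) : Fin r → ℝ := fun i => (v i : ℝ)

/-- The convex cone generated with nonnegative real coefficients by the finite set
`G` of lattice points of `ℤʳ`. -/
def latticeCone {r : ℕ} (G : Finset (Fin r → ℤ)) : Set (Fin r → ℝ) :=
  {x | ∃ c : (Fin r → ℤ) → ℝ, (∀ g, 0 ≤ c g) ∧ x = ∑ g ∈ G, c g • intVec g}

/-- `A ⊆ ℝʳ` is a lattice polyhedron with tail cone `latticeCone G`:
the Minkowski sum of the convex hull of a finite nonempty set of lattice points
and the cone `latticeCone G`. -/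
def IsLatticePolyhedron {r : ℕ} (G : Finset (Fin r → ℤ)) (A : Set (Fin r → ℝ)) : Prop :=
  ∃ S : Finset (Fin r → ℤ), S.Nonempty ∧ A = convexHull ℝ (intVec '' ↑S) + latticeCone G

/-!
A nonempty lattice polyhedron contains a lattice point, so `C^F_•` is spanned by the `C^F_•(m)` with
`m ∈ ℤʳ`. Exactness only needs the `∇_i` to be closed and convex with convex union: choosing a point
in each nonempty `F(J)`, it suffices to treat `C^{F ∩ C}_•`, where `C` is the (compact) convex hull
of the chosen points. If this complex fails to be exact for some compact convex `C`, then by Zorn's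
lemma it fails for a minimal one. A point gives a cone, which is exact; any other `C` is cut by a
hyperplane into two strictly smaller pieces meeting in a strictly smaller slice, and Mayer–Vietoris
glues the three exact complexes together.
-/

section MayerVietoris

variable {R M : Type*} [Ring R] [AddCommGroup M] [Module R M]

/-- The differential `d` has no homology on the submodule `A`. The module carries no grading:
`A` stands for the total space of a subcomplex. -/
def IsExactOn (d : Module.End R M) (A : Submodule R M) : Prop :=
  ∀ x ∈ A, d x = 0 → ∃ y ∈ A, d y = x

lemma isExactOn_bot (d : Module.End R M) : IsExactOn d ⊥ := fun x hx _ =>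
  ⟨0, zero_mem _, by rw [map_zero, (Submodule.mem_bot R).mp hx]⟩

lemma IsExactOn.sup {d : Module.End R M} (hd : ∀ x, d (d x) = 0) {A B : Submodule R M}
    (hA : A ≤ A.comap d) (hB : B ≤ B.comap d) (eA : IsExactOn d A) (eB : IsExactOn d B)
    (eAB : IsExactOn d (A ⊓ B)) : IsExactOn d (A ⊔ B) := by
  intro x hx hdx
  obtain ⟨a, ha, b, hb, rfl⟩ := Submodule.mem_sup.mp hx
  have hdb : d b = -d a := eq_neg_of_add_eq_zero_right (by rw [← map_add, hdx])
  have hda_mem : d a ∈ A ⊓ B := ⟨hA ha, by rw [← neg_neg (d a), ← hdb]; exact neg_mem (hB hb)⟩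
  obtain ⟨w, ⟨hwA, hwB⟩, hdw⟩ := eAB (d a) hda_mem (hd a)
  obtain ⟨y, hy, hdy⟩ := eA (a - w) (sub_mem ha hwA) (by rw [map_sub, hdw, sub_self])
  obtain ⟨z, hz, hdz⟩ := eB (b + w) (add_mem hb hwB) (by rw [map_add, hdw, hdb, neg_add_cancel])
  exact ⟨y + z, Submodule.add_mem_sup hy hz, by rw [map_add, hdy, hdz]; abel⟩

end MayerVietoris

section Koszul

section Chains

omit [Fintype I]

/-- The sign with which `e_{J ∪ {i}}` contributes to `e_J` under the Koszul differential. -/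
def koszulSign (J : Finset I) (i : I) : ℂ := (-1) ^ (J.filter (· < i)).card

lemma koszulSign_mul_self (J : Finset I) (i : I) : koszulSign J i * koszulSign J i = 1 := by
  rw [koszulSign, ← mul_pow, neg_one_mul, neg_neg, one_pow]

lemma koszulSign_insert_of_lt {J : Finset I} {a b : I} (ha : a ∉ J) (hab : a < b) :
    koszulSign (insert a J) b = -koszulSign J b := by
  rw [koszulSign, koszulSign, Finset.filter_insert, if_pos hab,
    Finset.card_insert_of_notMem fun h => ha (Finset.mem_of_mem_filter a h), pow_succ, mul_neg_one]

lemma koszulSign_insert_of_le (J : Finset I) {a b : I} (hba : b ≤ a) :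
    koszulSign (insert a J) b = koszulSign J b := by
  rw [koszulSign, koszulSign, Finset.filter_insert, if_neg hba.not_gt]

lemma koszulSign_insert_mul_koszulSign_insert {J : Finset I} {a b : I} (ha : a ∉ J) (hb : b ∉ J)
    (hab : a ≠ b) :
    koszulSign (insert a J) b * koszulSign (insert b J) a = -(koszulSign J a * koszulSign J b) := by
  rcases hab.lt_or_gt with h | h
  · rw [koszulSign_insert_of_lt ha h, koszulSign_insert_of_le J h.le]
    ring
  · rw [koszulSign_insert_of_lt hb h, koszulSign_insert_of_le J h.le]
    ring

/-- Exterior multiplication `x ↦ e_a ∧ x`, in the coordinates of the basis `e_J`. -/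
def wedge (a : I) : Module.End ℂ (Finset I → ℂ) where
  toFun x J := if a ∈ J then koszulSign (J.erase a) a * x (J.erase a) else 0
  map_add' x y := by
    ext J
    by_cases h : a ∈ J <;> simp [h, mul_add]
  map_smul' c x := by
    ext J
    by_cases h : a ∈ J <;> simp [h, mul_left_comm]

lemma wedge_apply_of_notMem {a : I} {J : Finset I} (ha : a ∉ J) (x : Finset I → ℂ) :
    wedge a x J = 0 :=
  if_neg ha

lemma wedge_apply_insert {a : I} {J : Finset I} (ha : a ∉ J) (x : Finset I → ℂ) :
    wedge a x (insert a J) = koszulSign J a * x J := by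
  simp only [wedge, LinearMap.coe_mk, AddHom.coe_mk, Finset.mem_insert_self, if_true,
    Finset.erase_insert ha]

lemma wedge_eVec {a : I} {J : Finset I} (ha : a ∉ J) :
    wedge a (eVec J) = koszulSign J a • eVec (insert a J) := by
  ext K
  by_cases haK : a ∈ K
  · obtain ⟨L, haL, rfl⟩ : ∃ L, a ∉ L ∧ insert a L = K :=
      ⟨K.erase a, Finset.notMem_erase a K, Finset.insert_erase haK⟩
    by_cases hLJ : L = J
    · subst hLJ
      simp [wedge_apply_insert ha, eVec]
    · have : insert a L ≠ insert a J := fun h => hLJ (by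
        rw [← Finset.erase_insert haL, h, Finset.erase_insert ha])
      simp [wedge_apply_insert haL, eVec, hLJ, this]
  · have : K ≠ insert a J := fun h => haK (h ▸ Finset.mem_insert_self a J)
    simp [wedge_apply_of_notMem haK, eVec, this]

/-- The Koszul chains supported on a set `N` of subsets of `I`. When `N` is closed under passing to
subsets, this is the total space of a subcomplex. -/
def chainsOn (N : Set (Finset I)) : Submodule ℂ (Finset I → ℂ) :=
  Submodule.span ℂ (eVec '' N)

lemma eVec_eq_single (J : Finset I) : eVec J = Pi.single J 1 := by
  ext K
  simp only [eVec, Pi.single_apply]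

lemma mem_chainsOn [Finite I] {N : Set (Finset I)} {x : Finset I → ℂ} :
    x ∈ chainsOn N ↔ Function.support x ⊆ N := by
  have heVec : (eVec : Finset I → Finset I → ℂ) = Pi.basisFun ℂ (Finset I) := by
    ext1 J
    rw [Pi.basisFun_apply, eVec_eq_single]
  rw [chainsOn, heVec, Module.Basis.mem_span_image]
  have hsupp : (((Pi.basisFun ℂ (Finset I)).repr x).support : Set (Finset I)) =
      Function.support x := by
    ext J
    simp
  rw [hsupp]

lemma chainsOn_union (M N : Set (Finset I)) : chainsOn (M ∪ N) = chainsOn M ⊔ chainsOn N := by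
  rw [chainsOn, Set.image_union, Submodule.span_union, chainsOn, chainsOn]

lemma chainsOn_inter [Finite I] (M N : Set (Finset I)) :
    chainsOn (M ∩ N) = chainsOn M ⊓ chainsOn N := by
  ext x
  simp only [Submodule.mem_inf, mem_chainsOn, Set.subset_inter_iff]

lemma wedge_mem_chainsOn [Finite I] {N : Set (Finset I)} {a : I} (ha : ∀ J ∈ N, insert a J ∈ N)
    {x : Finset I → ℂ} (hx : x ∈ chainsOn N) : wedge a x ∈ chainsOn N := by
  rw [mem_chainsOn]
  intro J hJ
  have haJ : a ∈ J := by_contra fun h => hJ (wedge_apply_of_notMem h x)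
  rw [← Finset.insert_erase haJ] at hJ ⊢
  rw [Function.mem_support, wedge_apply_insert (Finset.notMem_erase a J)] at hJ
  exact ha _ (mem_chainsOn.mp hx (right_ne_zero_of_mul hJ))

end Chains

lemma koszulD_apply (x : Finset I → ℂ) (J : Finset I) :
    koszulD x J = ∑ i ∈ Jᶜ, koszulSign J i * x (insert i J) := rfl

/-- The Leibniz rule for the Koszul differential, which is contraction with a functional taking the
value `1` on every `e_a`. -/
lemma koszulD_wedge (a : I) (x : Finset I → ℂ) :
    koszulD (wedge a x) = x - wedge a (koszulD x) := by
  ext J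
  rw [Pi.sub_apply]
  by_cases ha : a ∈ J
  · obtain ⟨K, haK, rfl⟩ : ∃ K, a ∉ K ∧ insert a K = J :=
      ⟨J.erase a, Finset.notMem_erase a J, Finset.insert_erase ha⟩
    have hterm : ∀ i ∈ (insert a K)ᶜ, koszulSign (insert a K) i * wedge a x (insert i (insert a K))
        = -(koszulSign K a * (koszulSign K i * x (insert i K))) := by
      intro i hi
      obtain ⟨hia, hiK⟩ : i ≠ a ∧ i ∉ K := by simpa using hi
      have haiK : a ∉ insert i K := by simp [hia.symm, haK]
      rw [Finset.insert_comm, wedge_apply_insert haiK, ← mul_assoc,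
        koszulSign_insert_mul_koszulSign_insert haK hiK hia.symm]
      ring
    rw [koszulD_apply, Finset.sum_congr rfl hterm, Finset.sum_neg_distrib, ← Finset.mul_sum,
      wedge_apply_insert haK, koszulD_apply, Finset.compl_insert,
      ← Finset.add_sum_erase _ _ (Finset.mem_compl.mpr haK), mul_add, ← mul_assoc (koszulSign K a),
      koszulSign_mul_self]
    ring
  · rw [wedge_apply_of_notMem ha, sub_zero, koszulD_apply,
      Finset.sum_eq_single_of_mem a (Finset.mem_compl.mpr ha), wedge_apply_insert ha, ← mul_assoc,
      koszulSign_mul_self, one_mul]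
    intro i _ hia
    rw [wedge_apply_of_notMem (by simp [hia.symm, ha]), mul_zero]

lemma koszulD_eVec_empty : koszulD (eVec (∅ : Finset I)) = 0 := by
  ext J
  exact Finset.sum_eq_zero fun i _ => by simp [eVec]

/-- By the Leibniz rule, `d ∘ d` commutes with every `e_a ∧ ·`, so it vanishes because it kills
`e_∅`. -/
lemma koszulD_koszulD (x : Finset I → ℂ) : koszulD (koszulD x) = 0 := by
  suffices h : koszulD ∘ₗ koszulD = (0 : Module.End ℂ (Finset I → ℂ)) from LinearMap.congr_fun h x
  refine (Pi.basisFun ℂ (Finset I)).ext fun J => ?_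
  rw [Pi.basisFun_apply, ← eVec_eq_single, LinearMap.comp_apply, LinearMap.zero_apply]
  induction J using Finset.induction_on with
  | empty => rw [koszulD_eVec_empty, map_zero]
  | insert a J ha ih =>
    have hsmul : koszulSign J a • koszulD (koszulD (eVec (insert a J))) = 0 := by
      rw [← map_smul, ← map_smul, ← wedge_eVec ha, koszulD_wedge, map_sub, koszulD_wedge, ih,
        map_zero, sub_zero, sub_self]
    exact (smul_eq_zero.mp hsmul).resolve_left
      (left_ne_zero_of_mul_eq_one (koszulSign_mul_self J a))

lemma chainsOn_le_comap_koszulD {N : Set (Finset I)} (hN : IsLowerSet N) :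
    chainsOn N ≤ (chainsOn N).comap koszulD := by
  intro x hx
  rw [Submodule.mem_comap, mem_chainsOn]
  intro J hJ
  obtain ⟨i, -, hi⟩ := Finset.exists_ne_zero_of_sum_ne_zero hJ
  exact hN (Finset.subset_insert i J) (mem_chainsOn.mp hx (right_ne_zero_of_mul hi))

lemma isExactOn_chainsOn_union {M N : Set (Finset I)} (hM : IsLowerSet M) (hN : IsLowerSet N)
    (eM : IsExactOn koszulD (chainsOn M)) (eN : IsExactOn koszulD (chainsOn N))
    (eMN : IsExactOn koszulD (chainsOn (M ∩ N))) : IsExactOn koszulD (chainsOn (M ∪ N)) := by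
  rw [chainsOn_inter] at eMN
  rw [chainsOn_union]
  exact eM.sup koszulD_koszulD (chainsOn_le_comap_koszulD hM) (chainsOn_le_comap_koszulD hN) eN eMN

lemma isExactOn_chainsOn_of_insert_mem {N : Set (Finset I)} {a : I}
    (ha : ∀ J ∈ N, insert a J ∈ N) : IsExactOn koszulD (chainsOn N) := fun x hx hdx =>
  ⟨wedge a x, wedge_mem_chainsOn ha hx, by rw [koszulD_wedge, hdx, map_zero, sub_zero]⟩

lemma koszulD_indicator_card (x : Finset I → ℂ) (p : ℕ) :
    koszulD ({J | J.card = p + 1}.indicator x) = {J | J.card = p}.indicator (koszulD x) := by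
  ext J
  have hterm : ∀ i ∈ Jᶜ, {J : Finset I | J.card = p + 1}.indicator x (insert i J) =
      if J.card = p then x (insert i J) else 0 := fun i hi => by
    simp [Set.indicator_apply, Finset.card_insert_of_notMem (Finset.mem_compl.mp hi)]
  rw [koszulD_apply, Finset.sum_congr rfl fun i hi => by rw [hterm i hi], Set.indicator_apply]
  by_cases hJ : J.card = p <;> simp [hJ, koszulD_apply]

end Koszul

section EvaluationSubcomplexes

variable {α : Type*} (F : Finset I → Set α)

omit [Fintype I] in
lemma fullC_eq_chainsOn (p : ℕ) : fullC F p = chainsOn {J | J.card = p ∧ (F J).Nonempty} := by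
  simp only [fullC, chainsOn, Set.image, Set.mem_ofPred_eq, and_assoc, eq_comm]

omit [Fintype I] in
lemma evalC_eq_chainsOn (m : α) (p : ℕ) : evalC F m p = chainsOn {J | J.card = p ∧ m ∈ F J} := by
  simp only [evalC, chainsOn, Set.image, Set.mem_ofPred_eq, and_assoc, eq_comm]

omit [Fintype I] in
lemma fullC_eq_iSup_evalC {M : Type*} {pt : M → α}
    (hpt : ∀ J, (F J).Nonempty → ∃ m, pt m ∈ F J) (p : ℕ) :
    fullC F p = ⨆ m, evalC F (pt m) p := by
  have hunion : {J | J.card = p ∧ (F J).Nonempty} = ⋃ m, {J | J.card = p ∧ pt m ∈ F J} := by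
    ext J
    simp only [Set.mem_ofPred_eq, Set.mem_iUnion, exists_and_left, and_congr_right_iff]
    exact fun _ => ⟨hpt J, fun ⟨m, hm⟩ => ⟨pt m, hm⟩⟩
  simp only [fullC_eq_chainsOn, evalC_eq_chainsOn, hunion, chainsOn, Set.image_iUnion,
    Submodule.span_iUnion]

variable {F} in
lemma fullExact_of_isExactOn (h : IsExactOn koszulD (chainsOn {J | (F J).Nonempty})) :
    fullExact F := by
  intro p x hx hdx
  rw [fullC_eq_chainsOn, Set.ofPred_and, chainsOn_inter] at hx
  obtain ⟨y, hy, rfl⟩ := h x hx.2 hdx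
  refine ⟨{J | J.card = p + 1}.indicator y, ?_, ?_⟩
  · rw [fullC_eq_chainsOn, mem_chainsOn, Set.support_indicator]
    exact Set.inter_subset_inter_right _ (mem_chainsOn.mp hy)
  · rw [koszulD_indicator_card, Set.indicator_eq_self]
    exact mem_chainsOn.mp hx.1

end EvaluationSubcomplexes

section Nerve

variable {ι α : Type*} {F : Finset ι → Set α} {C D : Set α}

/-- The part of the nerve of `F` seen by `C`: the index sets `J` for which `F J` meets `C`. -/
def nerveIn (F : Finset ι → Set α) (C : Set α) : Set (Finset ι) :=
  {J | (F J ∩ C).Nonempty}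

lemma nerveIn_mono (h : C ⊆ D) : nerveIn F C ⊆ nerveIn F D :=
  fun _ hJ => hJ.mono (Set.inter_subset_inter_right _ h)

lemma isLowerSet_nerveIn (hF : Antitone F) (C : Set α) : IsLowerSet (nerveIn F C) :=
  fun _ _ h hJ => hJ.mono (Set.inter_subset_inter_left _ (hF h))

lemma nerveIn_union (F : Finset ι → Set α) (C D : Set α) :
    nerveIn F (C ∪ D) = nerveIn F C ∪ nerveIn F D := by
  ext J
  simp only [nerveIn, Set.inter_union_distrib_left, Set.union_nonempty, Set.mem_ofPred_eq,
    Set.mem_union]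

lemma exists_nerveIn_iInter_eq [Finite ι] [TopologicalSpace α] [T2Space α]
    (hF : ∀ J, IsClosed (F J)) {κ : Type*} [Nonempty κ] {C : κ → Set α}
    (hdir : Directed (· ⊇ ·) C) (hC : ∀ k, IsCompact (C k)) :
    ∃ k, nerveIn F (⋂ k, C k) = nerveIn F (C k) := by
  have hlocal : ∀ J, ∃ k, J ∈ nerveIn F (C k) → J ∈ nerveIn F (⋂ k, C k) := by
    intro J
    by_contra! hJ
    have hne := IsCompact.nonempty_iInter_of_directed_nonempty_isCompact_isClosed
      (fun k => F J ∩ C k)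
      (hdir.mono_comp (g := (F J ∩ ·)) _ fun _ _ h => Set.inter_subset_inter_right _ h)
      (fun k => (hJ k).1) (fun k => (hC k).inter_left (hF J))
      (fun k => (hF J).inter (hC k).isClosed)
    rw [← Set.inter_iInter] at hne
    exact (hJ (Classical.arbitrary κ)).2 hne
  choose k hk using hlocal
  obtain ⟨l, hl⟩ := hdir.finite_le k
  exact ⟨l, (nerveIn_mono (Set.iInter_subset C l)).antisymm fun J hJ =>
    hk J (nerveIn_mono (hl J) hJ)⟩

end Nerve

section FamilyFunctor

variable {α : Type*} {nab : I → Set α}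

omit [Fintype I]

lemma mem_familyFunctor {J : Finset I} {x : α} :
    x ∈ familyFunctor nab J ↔ (∃ i, x ∈ nab i) ∧ ∀ i ∈ J, x ∈ nab i := by
  rcases J.eq_empty_or_nonempty with rfl | ⟨i, hi⟩
  · simp [familyFunctor]
  · simp only [familyFunctor, if_neg (Finset.ne_empty_of_mem hi), Set.mem_iInter]
    exact ⟨fun h => ⟨⟨i, h i hi⟩, h⟩, And.right⟩

lemma antitone_familyFunctor (nab : I → Set α) : Antitone (familyFunctor nab) := by
  intro J K hJK x
  simp only [mem_familyFunctor]
  exact And.imp_right fun h i hi => h i (hJK hi)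

lemma familyFunctor_induction {P : Set α → Prop} (hunion : P (⋃ i, nab i))
    (hinter : ∀ J : Finset I, J.Nonempty → P (⋂ i ∈ J, nab i)) (J : Finset I) :
    P (familyFunctor nab J) := by
  rw [familyFunctor]
  split_ifs with hJ
  · exact hunion
  · exact hinter J (Finset.nonempty_iff_ne_empty.mpr hJ)

lemma isClosed_familyFunctor [Finite I] [TopologicalSpace α] (h : ∀ i, IsClosed (nab i))
    (J : Finset I) : IsClosed (familyFunctor nab J) :=
  familyFunctor_induction (isClosed_iUnion_of_finite h)
    (fun _ _ => isClosed_biInter fun i _ => h i) J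

lemma convex_familyFunctor {E : Type*} [AddCommGroup E] [Module ℝ E] {nab : I → Set E}
    (h : ∀ i, Convex ℝ (nab i)) (hunion : Convex ℝ (⋃ i, nab i)) (J : Finset I) :
    Convex ℝ (familyFunctor nab J) :=
  familyFunctor_induction hunion (fun _ _ => convex_iInter₂ fun i _ => h i) J

end FamilyFunctor

lemma isExactOn_nerveIn_of_subsingleton {α : Type*} (nab : I → Set α) {C : Set α}
    (hC : C.Subsingleton) : IsExactOn koszulD (chainsOn (nerveIn (familyFunctor nab) C)) := by
  rcases (nerveIn (familyFunctor nab) C).eq_empty_or_nonempty with h | ⟨J, x, hx, hxC⟩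
  · rw [h, chainsOn, Set.image_empty, Submodule.span_empty]
    exact isExactOn_bot _
  · obtain ⟨a, ha⟩ := (mem_familyFunctor.mp hx).1
    refine isExactOn_chainsOn_of_insert_mem (a := a) ?_
    rintro K ⟨y, hy, hyC⟩
    obtain rfl := hC hxC hyC
    refine ⟨x, mem_familyFunctor.mpr ⟨⟨a, ha⟩, ?_⟩, hxC⟩
    exact Finset.forall_mem_insert _ _ _ |>.mpr ⟨ha, (mem_familyFunctor.mp hy).2⟩

section ConvexNerve

variable {E : Type*} [AddCommGroup E] [Module ℝ E]

lemma nerveIn_inter_hyperplane {ι : Type*} {F : Finset ι → Set E} (hF : ∀ J, Convex ℝ (F J))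
    {C : Set E} (hC : Convex ℝ C) (f : E →ₗ[ℝ] ℝ) (t : ℝ) :
    nerveIn F (C ∩ {x | f x = t}) =
      nerveIn F (C ∩ {x | f x ≤ t}) ∩ nerveIn F (C ∩ {x | t ≤ f x}) := by
  ext J
  constructor
  · rintro ⟨x, hx, hxC, hxt⟩
    exact ⟨⟨x, hx, hxC, le_of_eq hxt⟩, ⟨x, hx, hxC, ge_of_eq hxt⟩⟩
  · rintro ⟨⟨x, hx, hxC, hxt⟩, ⟨y, hy, hyC, hyt⟩⟩
    have himage : Convex ℝ (f '' (F J ∩ C)) := ((hF J).inter hC).linear_image f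
    obtain ⟨z, ⟨hz, hzC⟩, hzt⟩ :=
      himage.ordConnected.out ⟨x, ⟨hx, hxC⟩, rfl⟩ ⟨y, ⟨hy, hyC⟩, rfl⟩ ⟨hxt, hyt⟩
    exact ⟨z, hz, hzC, hzt⟩

lemma isExactOn_nerveIn_of_cut {F : Finset I → Set E} (hF : Antitone F)
    (hconv : ∀ J, Convex ℝ (F J)) {C : Set E} (hC : Convex ℝ C) (f : E →ₗ[ℝ] ℝ) (t : ℝ)
    (hle : IsExactOn koszulD (chainsOn (nerveIn F (C ∩ {x | f x ≤ t}))))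
    (hge : IsExactOn koszulD (chainsOn (nerveIn F (C ∩ {x | t ≤ f x}))))
    (heq : IsExactOn koszulD (chainsOn (nerveIn F (C ∩ {x | f x = t})))) :
    IsExactOn koszulD (chainsOn (nerveIn F C)) := by
  have hcut : C = C ∩ {x | f x ≤ t} ∪ C ∩ {x | t ≤ f x} := by
    rw [← Set.inter_union_distrib_left]
    exact (Set.inter_eq_left.mpr fun x _ => le_total (f x) t).symm
  rw [nerveIn_inter_hyperplane hconv hC] at heq
  rw [hcut, nerveIn_union]
  exact isExactOn_chainsOn_union (isLowerSet_nerveIn hF _) (isLowerSet_nerveIn hF _) hle hge heq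

variable [TopologicalSpace E]

lemma exists_minimal_isCompact_convex_nerveIn [T2Space E] {ι : Type*} [Finite ι]
    {F : Finset ι → Set E} (hF : ∀ J, IsClosed (F J)) {P : Set (Finset ι) → Prop} {C : Set E}
    (hC : IsCompact C) (hconv : Convex ℝ C) (hP : P (nerveIn F C)) :
    ∃ M, Minimal (fun D => IsCompact D ∧ Convex ℝ D ∧ P (nerveIn F D)) M := by
  have hlower : ∀ c ⊆ {D : Set E | IsCompact D ∧ Convex ℝ D ∧ P (nerveIn F D)},
      IsChain (· ⊆ ·) c → c.Nonempty →
      ∃ L ∈ {D : Set E | IsCompact D ∧ Convex ℝ D ∧ P (nerveIn F D)}, ∀ D ∈ c, L ⊆ D := by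
    intro c hc hchain hne
    have : Nonempty c := hne.to_subtype
    obtain ⟨⟨D, hD⟩, hnerve⟩ := exists_nerveIn_iInter_eq hF (C := ((↑) : c → Set E))
      (show IsChain (· ⊇ ·) c from hchain.symm).directedOn.directed_val fun D => (hc D.2).1
    rw [← Set.sInter_eq_iInter] at hnerve
    have hcompact : IsCompact (⋂₀ c) := (hc hD).1.of_isClosed_subset
      (isClosed_sInter fun D hD => (hc hD).1.isClosed) (Set.sInter_subset_of_mem hD)
    exact ⟨⋂₀ c, ⟨hcompact, convex_sInter fun D hD => (hc hD).2.1, hnerve ▸ (hc hD).2.2⟩,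
      fun D hD => Set.sInter_subset_of_mem hD⟩
  obtain ⟨M, -, hM⟩ := zorn_superset_nonempty _ hlower C ⟨hC, hconv, hP⟩
  exact ⟨M, hM⟩

variable {nab : I → Set E}

lemma isExactOn_nerveIn_of_isCompact [SeparatingDual ℝ E] (hclosed : ∀ i, IsClosed (nab i))
    (hconv : ∀ J, Convex ℝ (familyFunctor nab J)) {C : Set E} (hC : IsCompact C)
    (hCconv : Convex ℝ C) : IsExactOn koszulD (chainsOn (nerveIn (familyFunctor nab) C)) := by
  have : T2Space E := SeparatingDual.t2Space (R := ℝ)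
  by_contra hbad
  obtain ⟨M, ⟨hM, hMconv, hMbad⟩, hmin⟩ := exists_minimal_isCompact_convex_nerveIn
    (P := fun N => ¬IsExactOn koszulD (chainsOn N)) (isClosed_familyFunctor hclosed) hC hCconv hbad
  obtain ⟨x, hx, y, hy, hxy⟩ := Set.not_subsingleton_iff.mp
    fun h => hMbad (isExactOn_nerveIn_of_subsingleton nab h)
  obtain ⟨f, hf⟩ := SeparatingDual.exists_separating_of_ne (R := ℝ) hxy
  have hsmaller : ∀ H : Set E, IsClosed H → Convex ℝ H → ¬(x ∈ H ∧ y ∈ H) →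
      IsExactOn koszulD (chainsOn (nerveIn (familyFunctor nab) (M ∩ H))) := by
    intro H hH hHconv hxyH
    by_contra h
    have hMH := hmin ⟨hM.inter_right hH, hMconv.inter hHconv, h⟩ Set.inter_subset_left
    exact hxyH ⟨(hMH hx).2, (hMH hy).2⟩
  set t := (f x + f y) / 2 with ht
  refine hMbad (isExactOn_nerveIn_of_cut (antitone_familyFunctor nab) hconv hMconv f.toLinearMap t
    (hsmaller _ (isClosed_le f.continuous continuous_const) (convex_halfSpace_le f.isLinear t) ?_)
    (hsmaller _ (isClosed_le continuous_const f.continuous) (convex_halfSpace_ge f.isLinear t) ?_)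
    (hsmaller _ (isClosed_eq f.continuous continuous_const) (convex_hyperplane f.isLinear t) ?_))
  · rintro ⟨hxt : f x ≤ t, hyt : f y ≤ t⟩
    exact hf (by linarith)
  · rintro ⟨hxt : t ≤ f x, hyt : t ≤ f y⟩
    exact hf (by linarith)
  · rintro ⟨hxt : f x = t, hyt : f y = t⟩
    exact hf (hxt.trans hyt.symm)

lemma exists_isCompact_convex_nerveIn_eq [IsTopologicalAddGroup E] [ContinuousSMul ℝ E]
    {ι : Type*} [Finite ι] (F : Finset ι → Set E) :
    ∃ C, IsCompact C ∧ Convex ℝ C ∧ nerveIn F C = {J | (F J).Nonempty} := by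
  choose! pt hpt using fun (J : Finset ι) (hJ : (F J).Nonempty) => hJ
  refine ⟨convexHull ℝ (Set.range pt), (Set.finite_range pt).isCompact_convexHull ℝ,
    convex_convexHull ℝ _, ?_⟩
  ext J
  exact ⟨fun h => h.mono Set.inter_subset_left,
    fun h => ⟨pt J, hpt J h, subset_convexHull ℝ _ ⟨J, rfl⟩⟩⟩

lemma fullExact_familyFunctor [IsTopologicalAddGroup E] [ContinuousSMul ℝ E] [SeparatingDual ℝ E]
    (hclosed : ∀ i, IsClosed (nab i)) (hconv : ∀ i, Convex ℝ (nab i))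
    (hunion : Convex ℝ (⋃ i, nab i)) : fullExact (familyFunctor nab) := by
  obtain ⟨C, hC, hCconv, hnerve⟩ := exists_isCompact_convex_nerveIn_eq (familyFunctor nab)
  exact fullExact_of_isExactOn (hnerve ▸ isExactOn_nerveIn_of_isCompact hclosed
    (convex_familyFunctor hconv hunion) hC hCconv)

end ConvexNerve

section FinitelyGeneratedCones

variable {ι E : Type*} [AddCommGroup E]

section OrderedField

variable {𝕜 : Type*} [Field 𝕜] [LinearOrder 𝕜] [IsStrictOrderedRing 𝕜] [Module 𝕜 E]

lemma mem_hull_image_finset {v : ι → E} {s : Finset ι} {x : E} :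
    x ∈ PointedCone.hull 𝕜 (v '' s) ↔ ∃ c : ι → 𝕜, (∀ i, 0 ≤ c i) ∧ ∑ i ∈ s, c i • v i = x := by
  rw [Submodule.mem_span_image_finset_iff_exists_fun']
  exact ⟨fun ⟨c, hc⟩ => ⟨fun i => c i, fun i => (c i).2, hc⟩,
    fun ⟨c, hc, hx⟩ => ⟨fun i => ⟨c i, hc i⟩, hx⟩⟩

lemma exists_pos_relation_of_not_linearIndepOn {v : ι → E} {s : Finset ι}
    (hs : ¬LinearIndepOn 𝕜 v s) : ∃ a : ι → 𝕜, ∑ i ∈ s, a i • v i = 0 ∧ ∃ i ∈ s, 0 < a i := by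
  obtain ⟨a, ha, i, hi, hai⟩ := not_linearIndepOn_finset_iff.mp hs
  rcases hai.lt_or_gt with hneg | hpos
  · exact ⟨-a, by simp [ha], i, hi, neg_pos.mpr hneg⟩
  · exact ⟨a, ha, i, hi, hpos⟩

/-- The reduction step of Carathéodory's theorem for cones: subtract the largest multiple of a
linear relation that keeps all coefficients nonnegative. -/
lemma exists_mem_hull_image_erase [DecidableEq ι] {v : ι → E} {s : Finset ι}
    (hs : ¬LinearIndepOn 𝕜 v s) {x : E} (hx : x ∈ PointedCone.hull 𝕜 (v '' s)) :
    ∃ k ∈ s, x ∈ PointedCone.hull 𝕜 (v '' ↑(s.erase k)) := by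
  obtain ⟨c, hc, rfl⟩ := mem_hull_image_finset.mp hx
  obtain ⟨a, ha, i, hi, hai⟩ := exists_pos_relation_of_not_linearIndepOn hs
  obtain ⟨k, hk, hmin⟩ := (s.filter (0 < a ·)).exists_min_image (fun i => c i / a i)
    ⟨i, Finset.mem_filter.mpr ⟨hi, hai⟩⟩
  obtain ⟨hks, hak⟩ := Finset.mem_filter.mp hk
  set t := c k / a k with ht
  have hnonneg : ∀ i ∈ s, 0 ≤ c i - t * a i := by
    intro i hi
    rcases lt_or_ge 0 (a i) with hpos | hnonpos
    · exact sub_nonneg.mpr ((le_div_iff₀ hpos).mp (hmin i (Finset.mem_filter.mpr ⟨hi, hpos⟩)))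
    · exact sub_nonneg.mpr ((mul_nonpos_of_nonneg_of_nonpos (div_nonneg (hc k) hak.le)
        hnonpos).trans (hc i))
  have hsum : ∑ i ∈ s, c i • v i = ∑ i ∈ s.erase k, (c i - t * a i) • v i :=
    calc ∑ i ∈ s, c i • v i = ∑ i ∈ s, (c i - t * a i) • v i := by
          simp only [sub_smul, mul_smul, Finset.sum_sub_distrib, ← Finset.smul_sum, ha, smul_zero,
            sub_zero]
      _ = ∑ i ∈ s.erase k, (c i - t * a i) • v i :=
          (Finset.sum_erase s (by rw [ht, div_mul_cancel₀ _ hak.ne', sub_self, zero_smul])).symm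
  rw [hsum]
  exact ⟨k, hks, sum_mem fun i hi => PointedCone.smul_mem _
    (hnonneg i (Finset.mem_of_mem_erase hi)) (Submodule.subset_span (Set.mem_image_of_mem v hi))⟩

end OrderedField

variable [Module ℝ E] [TopologicalSpace E] [IsTopologicalAddGroup E] [ContinuousSMul ℝ E]
  [T2Space E]

lemma isClosed_hull_image_of_linearIndepOn {v : ι → E} {s : Finset ι}
    (hs : LinearIndepOn ℝ v s) : IsClosed (PointedCone.hull ℝ (v '' s) : Set E) := by
  have himage : (PointedCone.hull ℝ (v '' s) : Set E) =
      Fintype.linearCombination ℝ (fun i : s => v i) '' Set.Ici 0 := by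
    ext x
    rw [SetLike.mem_coe, Submodule.mem_span_image_finset_iff_exists_fun]
    exact ⟨fun ⟨c, hc⟩ => ⟨fun i => c i, fun i => (c i).2, hc⟩,
      fun ⟨c, hc, hx⟩ => ⟨fun i => ⟨c i, hc i⟩, hx⟩⟩
  rw [himage]
  exact (LinearMap.isClosedEmbedding_of_injective (LinearMap.ker_eq_bot.mpr
    (LinearIndependent.fintypeLinearCombination_injective hs))).isClosedMap _ isClosed_Ici

lemma isClosed_hull_image_finset (v : ι → E) (s : Finset ι) :
    IsClosed (PointedCone.hull ℝ (v '' s) : Set E) := by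
  classical
  induction s using Finset.strongInduction with
  | H s ih =>
    by_cases hs : LinearIndepOn ℝ v s
    · exact isClosed_hull_image_of_linearIndepOn hs
    · have hfaces : (PointedCone.hull ℝ (v '' s) : Set E) =
          ⋃ k ∈ s, PointedCone.hull ℝ (v '' ↑(s.erase k)) := by
        refine subset_antisymm (fun x hx => ?_) (Set.iUnion₂_subset fun k _ =>
          Submodule.span_mono (Set.image_mono (s.erase_subset k)))
        obtain ⟨k, hk, hxk⟩ := exists_mem_hull_image_erase hs hx
        exact Set.mem_biUnion hk hxk
      rw [hfaces]
      exact s.finite_toSet.isClosed_biUnion fun k hk => ih _ (Finset.erase_ssubset hk)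

end FinitelyGeneratedCones

section LatticePolyhedra

variable {r : ℕ} {G : Finset (Fin r → ℤ)} {A : Set (Fin r → ℝ)}

lemma latticeCone_eq_hull (G : Finset (Fin r → ℤ)) :
    latticeCone G = PointedCone.hull ℝ (intVec '' (G : Set (Fin r → ℤ))) := by
  ext x
  rw [SetLike.mem_coe, mem_hull_image_finset]
  simp only [latticeCone, Set.mem_ofPred_eq, eq_comm]

lemma IsLatticePolyhedron.convex (h : IsLatticePolyhedron G A) : Convex ℝ A := by
  obtain ⟨S, -, rfl⟩ := h
  rw [latticeCone_eq_hull]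
  exact (convex_convexHull ℝ _).add (PointedCone.convex _)

lemma IsLatticePolyhedron.isClosed (h : IsLatticePolyhedron G A) : IsClosed A := by
  obtain ⟨S, -, rfl⟩ := h
  rw [latticeCone_eq_hull]
  exact (isClosed_hull_image_finset intVec G).add_left_of_isCompact
    ((S.finite_toSet.image intVec).isCompact_convexHull ℝ)

lemma IsLatticePolyhedron.exists_intVec_mem (h : IsLatticePolyhedron G A) :
    ∃ m, intVec m ∈ A := by
  obtain ⟨S, ⟨m, hm⟩, rfl⟩ := h
  rw [latticeCone_eq_hull]
  exact ⟨m, intVec m, subset_convexHull ℝ _ ⟨m, hm, rfl⟩, 0, zero_mem _, add_zero _⟩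

end LatticePolyhedra

theorem full_subcomplex_exact_general {E M : Type*} [AddCommGroup E] [Module ℝ E]
    [TopologicalSpace E] [IsTopologicalAddGroup E] [ContinuousSMul ℝ E] [SeparatingDual ℝ E]
    (pt : M → E) (nab : I → Set E) (hclosed : ∀ i, IsClosed (nab i))
    (hconv : ∀ i, Convex ℝ (nab i)) (hunion : Convex ℝ (⋃ i, nab i))
    (hpt : ∀ J, (familyFunctor nab J).Nonempty → ∃ m, pt m ∈ familyFunctor nab J) :
    fullExact (familyFunctor nab) ∧
    (∀ p : ℕ, fullC (familyFunctor nab) p = ⨆ m, evalC (familyFunctor nab) (pt m) p) :=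
  ⟨fullExact_familyFunctor hclosed hconv hunion, fullC_eq_iSup_evalC _ hpt⟩

/-- Lemma 4 (iii) of the paper.
Let `(∇_i)_{i∈I}` be a finite family of lattice polyhedra in `ℝʳ`, all with the same tail
cone `C₀ = latticeCone G₀`, such that `∇ = ⋃_i ∇_i` is again a lattice polyhedron with tail
cone `C₀`, and every nonempty intersection `∇_{I'} = ⋂_{i ∈ I'} ∇_i` (`∅ ≠ I' ⊆ I`) is a
lattice polyhedron with tail cone `C₀`.  With `F(∅) := ∇` and `F(I') := ∇_{I'}`, the
subcomplex `C^F_•` of the Koszul complex is exact, and `C^F_• = Σ_{m ∈ ℤʳ} C^F_•(m)`. -/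
theorem full_subcomplex_exact {r : ℕ} (G₀ : Finset (Fin r → ℤ))
    (nab : I → Set (Fin r → ℝ))
    (hnab : ∀ i, IsLatticePolyhedron G₀ (nab i))
    (hunion : IsLatticePolyhedron G₀ (⋃ i, nab i))
    (hinter : ∀ J : Finset I, J.Nonempty →
      (⋂ i ∈ J, nab i) = ∅ ∨ IsLatticePolyhedron G₀ (⋂ i ∈ J, nab i)) :
    fullExact (familyFunctor nab) ∧
    (∀ p : ℕ, fullC (familyFunctor nab) p =
      ⨆ m : Fin r → ℤ, evalC (familyFunctor nab) (intVec m) p) :=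
  full_subcomplex_exact_general intVec nab (fun i => (hnab i).isClosed) (fun i => (hnab i).convex)
    hunion.convex (familyFunctor_induction (P := fun A => A.Nonempty → ∃ m, intVec m ∈ A)
      (fun _ => hunion.exists_intVec_mem)
      fun J hJ hne => ((hinter J hJ).resolve_left hne.ne_empty).exists_intVec_mem)

end
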